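/- In the expansion S(r, α, β) = p^r·[α^{r-1} + ∑_{k=1}^{r-1} θ_k^r(β)·α^{r-k-1}·β^{k+1}·p^k] (with p = 1/(1-β)), the leading coefficient polynomial satisfies θ_1^r(β) = C(r,2) for all r ≥ 2; concretely, for r ≥ 2, 0 ≤ β < 1, and α > 0, the coefficient of α^{r-2} in (1-β)^r·S(r,α,β), viewed as a polynomial in α, equals C(r,2)·β²/(1-β). -/

import Mathlib

/-- `S r α β = ∑_{k=0}^∞ (α+βk)^{k+r-1}/k! · e^{-(α+βk)}`, written with the exponent
`k+r-1` as `(α+βk)^{k+r}/(α+βk)`. -/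
noncomputable def jainS (r : ℕ) (α β : ℝ) : ℝ :=
  ∑' k : ℕ, (α + β * k) ^ (k + r) / (α + β * k) / (Nat.factorial k) * Real.exp (-(α + β * k))

/-!
Writing `G s α = S (s + 1) α β`, splitting one factor `α + β k` off each term gives
`G (s + 1) α = α * G s α + β * G (s + 1) (α + β)`. The equation `h α = β * h (α + β)` has no
nonzero solution of small exponential growth, so if `G s` is a polynomial then `G (s + 1)` is the
polynomial solution `Q` of `Q - β * Q (X + β) = X * G s`; comparing its two top coefficients gives
`θ₁`. For `s = 0`, the derivative of `G 0` is the difference `G 0 (α + β) - G 0 α`, which by the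
mean value theorem is again contracted by the factor `β`, hence vanishes: `G 0` is constant.
-/

open Polynomial Set Filter Asymptotics
open scoped Nat Topology

section Taylor

theorem coeff_taylor_of_natDegree_le_succ {R : Type*} [CommSemiring R] (b : R) {p : R[X]} {n : ℕ}
    (hp : p.natDegree ≤ n + 1) :
    (taylor b p).coeff n = p.coeff n + (n + 1) * b * p.coeff (n + 1) := by
  have hdeg : (hasseDeriv n p).natDegree < 2 := by
    have := natDegree_hasseDeriv_le p n
    omega
  rw [taylor_coeff, eval_eq_sum_range' hdeg]
  simp only [hasseDeriv_coeff, Finset.sum_range_succ, Finset.sum_range_zero, zero_add,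
    Nat.choose_self, add_comm 1 n, Nat.choose_succ_self_right]
  push_cast
  ring

theorem degree_taylor_sub_lt {R : Type*} [Ring R] (b : R) {p : R[X]} (hp : p ≠ 0) :
    (taylor b p - p).degree < p.degree :=
  degree_sub_lt_right (degree_taylor p b) hp (leadingCoeff_taylor b p)

theorem taylor_sub_one_pow_apply_eq_zero {R : Type*} [Ring R] (b : R) {n : ℕ} {p : R[X]}
    (hp : p.degree < n) : ((taylor b - 1 : Module.End R R[X]) ^ n) p = 0 := by
  induction n generalizing p with
  | zero => simpa using hp
  | succ n ih =>
    rcases eq_or_ne p 0 with rfl | hp0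
    · exact map_zero _
    · rw [pow_succ, Module.End.mul_apply]
      refine ih ((degree_taylor_sub_lt b hp0).trans_le ?_)
      have hnat : p.natDegree < n + 1 := (natDegree_lt_iff_degree_lt hp0).mpr hp
      exact natDegree_le_iff_degree_le.mp (Nat.lt_succ_iff.mp hnat)

theorem natDegree_sub_C_mul_taylor {R : Type*} [Ring R] [IsDomain R] {c : R} (hc : c ≠ 1) (b : R)
    (p : R[X]) :
    (p - C c * taylor b p).natDegree = p.natDegree := by
  refine le_antisymm ?_ ?_
  · refine (natDegree_sub_le _ _).trans (max_le le_rfl ?_)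
    exact (natDegree_C_mul_le _ _).trans (natDegree_taylor p b).le
  · rcases eq_or_ne p 0 with rfl | hp
    · simp
    · refine le_natDegree_of_ne_zero ?_
      rw [coeff_sub, coeff_C_mul, coeff_taylor_natDegree, coeff_natDegree, ← one_sub_mul]
      exact mul_ne_zero (sub_ne_zero.mpr hc.symm) (leadingCoeff_ne_zero.mpr hp)

variable {K : Type*} [Field K] {c : K}

/-- The polynomial solution `Q` of `Q - c * Q (X + b) = p` for `c ≠ 1`, given by the Neumann series
in the difference operator `Q ↦ Q (X + b) - Q`; the series is finite since this operator lowers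
degrees. -/
noncomputable def taylorResolvent (b c : K) (p : K[X]) : K[X] :=
  (1 - c)⁻¹ • ∑ j ∈ Finset.range (p.natDegree + 1),
    (((c / (1 - c)) • (taylor b - 1) : Module.End K K[X]) ^ j) p

theorem taylorResolvent_sub_C_mul_taylor (hc : c ≠ 1) (b : K) (p : K[X]) :
    taylorResolvent b c p - C c * taylor b (taylorResolvent b c p) = p := by
  have hc' : 1 - c ≠ 0 := sub_ne_zero.mpr hc.symm
  set N : Module.End K K[X] := (c / (1 - c)) • (taylor b - 1) with hN
  set q := ∑ j ∈ Finset.range (p.natDegree + 1), (N ^ j) p with hq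
  have htelescope : q - N q = p := by
    have hnil : (N ^ (p.natDegree + 1)) p = 0 := by
      rw [hN, _root_.smul_pow, LinearMap.smul_apply, taylor_sub_one_pow_apply_eq_zero, smul_zero]
      exact degree_le_natDegree.trans_lt (by exact_mod_cast p.natDegree.lt_succ_self)
    simpa [hnil, ← hq] using LinearMap.congr_fun (mul_neg_geom_sum N (p.natDegree + 1)) p
  have hNq : (1 - c) • N q = c • (taylor b q - q) := by
    rw [hN, LinearMap.smul_apply, smul_smul, mul_div_cancel₀ _ hc']
    rfl
  calc taylorResolvent b c p - C c * taylor b (taylorResolvent b c p)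
      = (1 - c)⁻¹ • q - c • taylor b ((1 - c)⁻¹ • q) := by rw [← smul_eq_C_mul]; rfl
    _ = (1 - c)⁻¹ • ((1 - c) • q - c • (taylor b q - q)) := by rw [map_smul]; module
    _ = q - N q := by rw [← hNq, ← smul_sub, inv_smul_smul₀ hc']
    _ = p := htelescope

theorem natDegree_taylorResolvent (hc : c ≠ 1) (b : K) (p : K[X]) :
    (taylorResolvent b c p).natDegree = p.natDegree := by
  rw [← natDegree_sub_C_mul_taylor hc, taylorResolvent_sub_C_mul_taylor hc]

end Taylor

section JainPoly

variable {K : Type*} [Field K]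

/-- The polynomial in `α` which equals `S (s + 1) α β`. -/
noncomputable def jainPoly (β : K) : ℕ → K[X]
  | 0 => C (1 - β)⁻¹
  | s + 1 => taylorResolvent β β (X * jainPoly β s)

variable {β : K}

theorem jainPoly_succ_sub_C_mul_taylor (hβ : β ≠ 1) (s : ℕ) :
    jainPoly β (s + 1) - C β * taylor β (jainPoly β (s + 1)) = X * jainPoly β s :=
  taylorResolvent_sub_C_mul_taylor hβ β _

theorem jainPoly_ne_zero (hβ : β ≠ 1) (s : ℕ) : jainPoly β s ≠ 0 := by
  induction s with
  | zero => exact C_ne_zero.mpr (inv_ne_zero (sub_ne_zero.mpr hβ.symm))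
  | succ s ih =>
    intro h
    have := jainPoly_succ_sub_C_mul_taylor hβ s
    rw [h, map_zero, mul_zero, sub_zero] at this
    exact mul_ne_zero X_ne_zero ih this.symm

theorem natDegree_jainPoly (hβ : β ≠ 1) (s : ℕ) : (jainPoly β s).natDegree = s := by
  induction s with
  | zero => exact natDegree_C _
  | succ s ih =>
    rw [jainPoly, natDegree_taylorResolvent hβ, natDegree_X_mul (jainPoly_ne_zero hβ s), ih]

theorem one_sub_mul_coeff_jainPoly_succ (hβ : β ≠ 1) {s n : ℕ} (hn : s ≤ n) :
    (1 - β) * (jainPoly β (s + 1)).coeff n =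
      (X * jainPoly β s).coeff n + (n + 1) * β ^ 2 * (jainPoly β (s + 1)).coeff (n + 1) := by
  have h := congrArg (coeff · n) (jainPoly_succ_sub_C_mul_taylor hβ s)
  simp only [coeff_sub, coeff_C_mul] at h
  rw [coeff_taylor_of_natDegree_le_succ β (by rw [natDegree_jainPoly hβ]; omega)] at h
  linear_combination h

theorem coeff_jainPoly_self (hβ : β ≠ 1) (s : ℕ) :
    (jainPoly β s).coeff s = (1 - β)⁻¹ ^ (s + 1) := by
  have hβ' : 1 - β ≠ 0 := sub_ne_zero.mpr hβ.symm
  induction s with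
  | zero => simp [jainPoly]
  | succ s ih =>
    have hvanish : (jainPoly β (s + 1)).coeff (s + 1 + 1) = 0 :=
      coeff_eq_zero_of_natDegree_lt (by rw [natDegree_jainPoly hβ]; omega)
    have h := one_sub_mul_coeff_jainPoly_succ hβ s.le_succ
    rw [hvanish, coeff_X_mul, ih, mul_zero, add_zero] at h
    rw [pow_succ', ← h, inv_mul_cancel_left₀ hβ']

theorem coeff_jainPoly_succ (hβ : β ≠ 1) (s : ℕ) :
    (jainPoly β (s + 1)).coeff s = (s + 2).choose 2 * β ^ 2 * (1 - β)⁻¹ ^ (s + 3) := by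
  have hβ' : 1 - β ≠ 0 := sub_ne_zero.mpr hβ.symm
  have hX : (X * jainPoly β s).coeff s = (s + 1).choose 2 * β ^ 2 * (1 - β)⁻¹ ^ (s + 2) := by
    cases s with
    | zero => simp
    | succ s => rw [coeff_X_mul, coeff_jainPoly_succ hβ s]
  have hchoose : ((s + 2).choose 2 : K) = (s + 1) + (s + 1).choose 2 := by
    rw [Nat.choose_succ_succ' (s + 1) 1, Nat.choose_one_right]
    push_cast
    rfl
  have h := one_sub_mul_coeff_jainPoly_succ hβ s.le_refl
  rw [hX, coeff_jainPoly_self hβ] at h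
  rw [hchoose, pow_succ' _ (s + 2), ← mul_right_inj' hβ', h]
  field_simp
  ring

end JainPoly

section ExponentialGrowth

theorem eq_zero_of_norm_le_mul_norm_of_isBigO_exp {E : Type*} [NormedAddCommGroup E] {h : ℝ → E}
    {a b c η : ℝ} (hc : 0 ≤ c) (hη : 0 ≤ η) (hcη : c * Real.exp (η * b) < 1)
    (hgrowth : h =O[𝓟 (Ici a)] fun x => Real.exp (η * x))
    (hstep : ∀ x ≥ a, ∃ y ∈ Icc x (x + b), ‖h x‖ ≤ c * ‖h y‖) : h a = 0 := by
  obtain ⟨M, hM0, hM⟩ := hgrowth.exists_nonneg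
  have hiterate (n : ℕ) :
      ∀ x ≥ a, ‖h x‖ ≤ M * Real.exp (η * x) * (c * Real.exp (η * b)) ^ n := by
    induction n with
    | zero =>
      intro x hx
      simpa using isBigOWith_principal.mp hM x hx
    | succ n ih =>
      intro x hx
      obtain ⟨y, ⟨hxy, hyx⟩, hy⟩ := hstep x hx
      have hexp : Real.exp (η * y) ≤ Real.exp (η * x) * Real.exp (η * b) := by
        rw [← Real.exp_add, ← mul_add]
        gcongr
      calc ‖h x‖ ≤ c * ‖h y‖ := hy
        _ ≤ c * (M * Real.exp (η * y) * (c * Real.exp (η * b)) ^ n) := by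
          gcongr
          exact ih y (hx.trans hxy)
        _ ≤ c * (M * (Real.exp (η * x) * Real.exp (η * b)) * (c * Real.exp (η * b)) ^ n) := by
          gcongr
        _ = M * Real.exp (η * x) * (c * Real.exp (η * b)) ^ (n + 1) := by ring
  have hlim : Tendsto (fun n : ℕ => M * Real.exp (η * a) * (c * Real.exp (η * b)) ^ n) atTop
      (𝓝 (M * Real.exp (η * a) * 0)) :=
    (tendsto_pow_atTop_nhds_zero_of_lt_one (by positivity) hcη).const_mul _
  rw [mul_zero] at hlim
  exact norm_le_zero_iff.mp (ge_of_tendsto' hlim fun n => hiterate n a le_rfl)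

theorem isBigO_exp_comp_add_right {E : Type*} [Norm E] {h : ℝ → E} {a b η : ℝ}
    (hgrowth : h =O[𝓟 (Ici (a + b))] fun x => Real.exp (η * x)) :
    (fun x => h (x + b)) =O[𝓟 (Ici a)] fun x => Real.exp (η * x) := by
  obtain ⟨M, hM⟩ := isBigO_principal.mp hgrowth
  refine isBigO_principal.mpr ⟨M * Real.exp (η * b), fun x hx => ?_⟩
  have h := hM (x + b) (add_le_add_left hx b)
  rwa [mul_add, add_comm (η * x), Real.exp_add, norm_mul, Real.norm_of_nonneg (Real.exp_nonneg _),
    ← mul_assoc] at h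

theorem pow_le_factorial_div_pow_mul_exp {x δ : ℝ} (hx : 0 ≤ x) (hδ : 0 < δ) (n : ℕ) :
    x ^ n ≤ n ! / δ ^ n * Real.exp (δ * x) := by
  have h := Real.pow_div_factorial_le_exp (x := δ * x) (by positivity) n
  rw [div_le_iff₀ (by positivity), mul_pow] at h
  rw [div_mul_eq_mul_div, le_div_iff₀ (by positivity)]
  linarith

theorem pow_add_div_factorial_le {x t δ : ℝ} (hx : 0 ≤ x) (ht : 0 < t) (hδ : 0 < δ) (k s : ℕ) :
    x ^ (k + s) / k ! ≤ s ! / δ ^ s * Real.exp ((t + δ) * x) / t ^ k := by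
  calc x ^ (k + s) / k ! = x ^ k * x ^ s / k ! := by rw [pow_add]
    _ ≤ k ! / t ^ k * Real.exp (t * x) * (s ! / δ ^ s * Real.exp (δ * x)) / k ! := by
      gcongr
      · exact pow_le_factorial_div_pow_mul_exp hx ht k
      · exact pow_le_factorial_div_pow_mul_exp hx hδ s
    _ = s ! / δ ^ s * Real.exp ((t + δ) * x) / t ^ k := by
      rw [add_mul, Real.exp_add]
      field_simp

theorem abs_le_add_two_mul_abs_of_le {a x : ℝ} (h : a ≤ x) : |x| ≤ x + 2 * |a| :=
  abs_le.mpr ⟨by linarith [neg_abs_le a], by linarith [abs_nonneg a]⟩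

theorem isBigO_eval_exp (p : ℝ[X]) {η : ℝ} (hη : 0 < η) (a : ℝ) :
    (fun x => p.eval x) =O[𝓟 (Ici a)] fun x => Real.exp (η * x) := by
  induction p using Polynomial.induction_on' with
  | add p q hp hq => simpa only [eval_add] using hp.add hq
  | monomial n c =>
    simp only [eval_monomial]
    refine IsBigO.const_mul_left (isBigO_principal.mpr
      ⟨n ! / η ^ n * Real.exp (η * (2 * |a|)), fun x hx => ?_⟩) c
    have hxa : |x| ≤ x + 2 * |a| := abs_le_add_two_mul_abs_of_le hx
    rw [norm_pow, Real.norm_eq_abs, Real.norm_eq_abs, Real.abs_exp]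
    calc |x| ^ n ≤ n ! / η ^ n * Real.exp (η * |x|) :=
          pow_le_factorial_div_pow_mul_exp (abs_nonneg x) hη n
      _ ≤ n ! / η ^ n * Real.exp (η * (x + 2 * |a|)) := by gcongr
      _ = n ! / η ^ n * Real.exp (η * (2 * |a|)) * Real.exp (η * x) := by
        rw [mul_add, Real.exp_add]
        ring

end ExponentialGrowth

section JainSum

/-- The `k`-th term of `S (s + 1) α β`. -/
noncomputable def jainTerm (s : ℕ) (β α : ℝ) (k : ℕ) : ℝ :=
  (α + β * k) ^ (k + s) / k ! * Real.exp (-(α + β * k))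

/-- The sum `S (s + 1) α β`, as a function of `α`; the shift by one makes the exponents `k + s`
natural numbers. -/
noncomputable def jainSum (s : ℕ) (β α : ℝ) : ℝ :=
  ∑' k, jainTerm s β α k

theorem jainS_succ {s : ℕ} (hs : s ≠ 0) (α β : ℝ) : jainS (s + 1) α β = jainSum s β α := by
  refine tsum_congr fun k => ?_
  have hpow : (α + β * k) ^ (k + (s + 1)) / (α + β * k) = (α + β * k) ^ (k + s) := by
    rcases eq_or_ne (α + β * k) 0 with h | h
    · rw [h, div_zero, zero_pow (by omega)]
    · rw [← add_assoc, pow_succ, mul_div_cancel_right₀ _ h]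
  rw [hpow, jainTerm]

theorem jainTerm_succ (s : ℕ) (β α : ℝ) (k : ℕ) :
    jainTerm (s + 1) β α k = α * jainTerm s β α k + β * (k * jainTerm s β α k) := by
  simp only [jainTerm, ← add_assoc, pow_succ _ (k + s)]
  ring

theorem succ_mul_jainTerm_succ (s : ℕ) (β α : ℝ) (k : ℕ) :
    (k + 1 : ℕ) * jainTerm s β α (k + 1) = jainTerm (s + 1) β (α + β) k := by
  have hshift : α + β * (k + 1 : ℕ) = α + β + β * k := by
    push_cast
    ring
  rw [jainTerm, jainTerm, hshift, Nat.factorial_succ, add_right_comm k 1 s, add_assoc k s 1,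
    Nat.cast_mul]
  field_simp

theorem jainTerm_zero_zero_succ (β : ℝ) (k : ℕ) :
    jainTerm 0 β 0 (k + 1) = β * jainTerm 0 β β k := by
  have hshift : 0 + β * (k + 1 : ℕ) = β + β * k := by
    push_cast
    ring
  have hβ : β + β * k = (k + 1) * β := by ring
  rw [jainTerm, jainTerm, hshift, Nat.factorial_succ, Nat.cast_mul, add_zero, add_zero, pow_succ]
  nth_rewrite 2 [hβ]
  field_simp
  push_cast
  ring

theorem hasDerivAt_jainTerm_zero_succ (β : ℝ) (k : ℕ) (α : ℝ) :
    HasDerivAt (fun x => jainTerm 0 β x (k + 1))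
      (jainTerm 0 β (α + β) k - jainTerm 0 β α (k + 1)) α := by
  have hshift : α + β * (k + 1 : ℕ) = α + β + β * k := by
    push_cast
    ring
  have hlin : HasDerivAt (fun x : ℝ => x + β * (k + 1 : ℕ)) 1 α := (hasDerivAt_id α).add_const _
  have h := ((hlin.fun_pow (k + 1)).div_const ((k + 1)! : ℝ)).mul hlin.fun_neg.exp
  refine h.congr_deriv ?_
  simp only [jainTerm, add_zero, hshift, Nat.factorial_succ, Nat.cast_mul, Nat.add_sub_cancel]
  field_simp
  ring

-- This makes `1 - β` an admissible exponential growth rate in `α` for the sums `S`.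
theorem exp_one_sub_mul_self_lt {β : ℝ} (hβ : β < 1) : Real.exp ((1 - β) * β) < 2 - β := by
  have hinv : Real.exp ((1 - β) * β) * Real.exp (-((1 - β) * β)) = 1 := by
    rw [← Real.exp_add, add_neg_cancel, Real.exp_zero]
  have hle : 1 - (1 - β) * β ≤ Real.exp (-((1 - β) * β)) := Real.one_sub_le_exp_neg _
  have hcube : 1 < (2 - β) * (1 - (1 - β) * β) := by
    have : 0 < (1 - β) ^ 3 := pow_pos (by linarith) 3
    linear_combination this
  refine lt_of_mul_lt_mul_right ?_ (Real.exp_pos (-((1 - β) * β))).le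
  rw [hinv]
  exact hcube.trans_le (mul_le_mul_of_nonneg_left hle (by linarith))

variable {β : ℝ}

theorem mul_exp_one_sub_mul_self_lt_one (hβ0 : 0 ≤ β) (hβ1 : β < 1) :
    β * Real.exp ((1 - β) * β) < 1 := by
  calc β * Real.exp ((1 - β) * β) ≤ β * (2 - β) := by
        gcongr
        exact (exp_one_sub_mul_self_lt hβ1).le
    _ < 1 := by
      have : 0 < (1 - β) ^ 2 := pow_pos (by linarith) 2
      linear_combination this

theorem exists_abs_jainTerm_le (hβ0 : 0 ≤ β) (hβ1 : β < 1) (s : ℕ) (a : ℝ) :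
    ∃ M q : ℝ, 0 ≤ q ∧ q < 1 ∧ 0 ≤ M ∧
      ∀ x ≥ a, ∀ k, |jainTerm s β x k| ≤ M * Real.exp ((1 - β) * x) * q ^ k := by
  obtain ⟨t, hqt, htβ⟩ := exists_between (exp_one_sub_mul_self_lt hβ1)
  have ht : 0 < t := (Real.exp_pos _).trans hqt
  have hδ : 0 < 2 - β - t := sub_pos.mpr htβ
  set D := s ! / (2 - β - t) ^ s
  refine ⟨D * Real.exp ((2 - β) * (2 * |a|)), Real.exp ((1 - β) * β) / t, by positivity,
    (div_lt_one ht).mpr hqt, by positivity, fun x hx k => ?_⟩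
  have hl : |x + β * k| ≤ x + 2 * |a| + β * k := by
    have := abs_add_le x (β * k)
    rw [abs_of_nonneg (by positivity : 0 ≤ β * k)] at this
    linarith [abs_le_add_two_mul_abs_of_le hx]
  set l := x + 2 * |a| + β * k with hl_def
  have hl0 : 0 ≤ l := (abs_nonneg _).trans hl
  calc |jainTerm s β x k| = |x + β * k| ^ (k + s) / k ! * Real.exp (-(x + β * k)) := by
        rw [jainTerm, abs_mul, abs_div, abs_pow, Real.abs_exp, Nat.abs_cast]
    _ ≤ l ^ (k + s) / k ! * Real.exp (-(x + β * k)) := by gcongr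
    _ ≤ D * Real.exp ((t + (2 - β - t)) * l) / t ^ k * Real.exp (-(x + β * k)) :=
      mul_le_mul_of_nonneg_right (pow_add_div_factorial_le hl0 ht hδ k s) (Real.exp_nonneg _)
    _ = D * Real.exp ((t + (2 - β - t)) * l + -(x + β * k)) / t ^ k := by
      rw [Real.exp_add]
      ring
    _ = D * Real.exp ((2 - β) * (2 * |a|) + (1 - β) * x + k * ((1 - β) * β)) / t ^ k := by
      rw [hl_def]
      ring_nf
    _ = D * Real.exp ((2 - β) * (2 * |a|)) * Real.exp ((1 - β) * x) *
          (Real.exp ((1 - β) * β) / t) ^ k := by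
      rw [Real.exp_add, Real.exp_add, Real.exp_nat_mul, div_pow]
      ring

theorem exists_summable_abs_jainTerm_le (hβ0 : 0 ≤ β) (hβ1 : β < 1) (s : ℕ) (a b : ℝ) :
    ∃ u : ℕ → ℝ, Summable u ∧ ∀ x ∈ Icc a b, ∀ k, |jainTerm s β x k| ≤ u k := by
  obtain ⟨M, q, hq0, hq1, hM, h⟩ := exists_abs_jainTerm_le hβ0 hβ1 s a
  refine ⟨fun k => M * Real.exp ((1 - β) * b) * q ^ k,
    (summable_geometric_of_lt_one hq0 hq1).mul_left _, fun x hx k => (h x hx.1 k).trans ?_⟩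
  have hexp : (1 - β) * x ≤ (1 - β) * b := mul_le_mul_of_nonneg_left hx.2 (by linarith)
  beta_reduce
  gcongr

theorem summable_jainTerm (hβ0 : 0 ≤ β) (hβ1 : β < 1) (s : ℕ) (α : ℝ) :
    Summable (jainTerm s β α) := by
  obtain ⟨u, hu, h⟩ := exists_summable_abs_jainTerm_le hβ0 hβ1 s α α
  exact .of_norm_bounded hu (h α ⟨le_rfl, le_rfl⟩)

theorem isBigO_jainSum_exp (hβ0 : 0 ≤ β) (hβ1 : β < 1) (s : ℕ) (a : ℝ) :
    jainSum s β =O[𝓟 (Ici a)] fun x => Real.exp ((1 - β) * x) := by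
  obtain ⟨M, q, hq0, hq1, -, h⟩ := exists_abs_jainTerm_le hβ0 hβ1 s a
  refine isBigO_principal.mpr ⟨M * (1 - q)⁻¹, fun x hx => ?_⟩
  rw [Real.norm_eq_abs (Real.exp _), Real.abs_exp, mul_right_comm]
  exact tsum_of_norm_bounded ((hasSum_geometric_of_lt_one hq0 hq1).mul_left _) (h x hx)

theorem jainSum_succ (hβ0 : 0 ≤ β) (hβ1 : β < 1) (s : ℕ) (α : ℝ) :
    jainSum (s + 1) β α = α * jainSum s β α + β * jainSum (s + 1) β (α + β) := by
  have hweighted : HasSum (fun k : ℕ => k * jainTerm s β α k) (jainSum (s + 1) β (α + β)) := by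
    rw [← hasSum_nat_add_iff' 1]
    simp only [succ_mul_jainTerm_succ, Finset.sum_range_one, Nat.cast_zero, zero_mul, sub_zero]
    exact (summable_jainTerm hβ0 hβ1 (s + 1) (α + β)).hasSum
  rw [jainSum, funext (jainTerm_succ s β α)]
  exact (((summable_jainTerm hβ0 hβ1 s α).hasSum.mul_left α).add
    (hweighted.mul_left β)).tsum_eq

theorem jainSum_zero_zero (hβ0 : 0 ≤ β) (hβ1 : β < 1) :
    jainSum 0 β 0 = 1 + β * jainSum 0 β β := by
  rw [jainSum, (summable_jainTerm hβ0 hβ1 0 0).tsum_eq_zero_add,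
    funext (jainTerm_zero_zero_succ β), tsum_mul_left]
  simp [jainTerm, jainSum]

theorem hasDerivAt_jainSum_zero (hβ0 : 0 ≤ β) (hβ1 : β < 1) (α : ℝ) :
    HasDerivAt (jainSum 0 β) (jainSum 0 β (α + β) - jainSum 0 β α) α := by
  have hsummable := summable_jainTerm hβ0 hβ1 0
  have htail (x : ℝ) : Summable fun k => jainTerm 0 β x (k + 1) :=
    (summable_nat_add_iff 1).mpr (hsummable x)
  have hpeel (x : ℝ) : jainSum 0 β x = Real.exp (-x) + ∑' k, jainTerm 0 β x (k + 1) := by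
    rw [jainSum, (hsummable x).tsum_eq_zero_add]
    simp [jainTerm]
  obtain ⟨u, hu, hbound⟩ := exists_summable_abs_jainTerm_le hβ0 hβ1 0 (α - 1) (α + 1 + β)
  have hseries : HasDerivAt (fun x => ∑' k, jainTerm 0 β x (k + 1))
      (∑' k, (jainTerm 0 β (α + β) k - jainTerm 0 β α (k + 1))) α := by
    have hα : α ∈ Ioo (α - 1) (α + 1) := ⟨by linarith, by linarith⟩
    refine hasDerivAt_tsum_of_isPreconnected (hu.add ((summable_nat_add_iff 1).mpr hu)) isOpen_Ioo
      isPreconnected_Ioo (fun k x _ => hasDerivAt_jainTerm_zero_succ β k x) (fun k x hx => ?_)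
      hα (htail α) hα
    exact (norm_sub_le _ _).trans (add_le_add
      (hbound _ ⟨by linarith [hx.1], by linarith [hx.2]⟩ k)
      (hbound _ ⟨by linarith [hx.1], by linarith [hx.2]⟩ (k + 1)))
  have hderiv := ((hasDerivAt_neg α).exp.add hseries).congr_of_eventuallyEq (.of_forall hpeel)
  refine hderiv.congr_deriv ?_
  rw [(hsummable (α + β)).tsum_sub (htail α), hpeel α, jainSum]
  ring

theorem jainSum_zero_add_self (hβ0 : 0 ≤ β) (hβ1 : β < 1) (α : ℝ) :
    jainSum 0 β (α + β) = jainSum 0 β α := by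
  refine sub_eq_zero.mp (eq_zero_of_norm_le_mul_norm_of_isBigO_exp
    (h := fun x => jainSum 0 β (x + β) - jainSum 0 β x) hβ0 (sub_nonneg.mpr hβ1.le)
    (mul_exp_one_sub_mul_self_lt_one hβ0 hβ1) ?_ fun x _ => ?_)
  · exact (isBigO_exp_comp_add_right (isBigO_jainSum_exp hβ0 hβ1 0 (α + β))).sub
      (isBigO_jainSum_exp hβ0 hβ1 0 α)
  · rcases hβ0.eq_or_lt with rfl | hβ
    · exact ⟨x, by simp, by simp⟩
    · obtain ⟨y, hy, hslope⟩ := exists_hasDerivAt_eq_slope (jainSum 0 β)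
        (fun x => jainSum 0 β (x + β) - jainSum 0 β x) (lt_add_of_pos_right x hβ)
        (fun y _ => (hasDerivAt_jainSum_zero hβ0 hβ1 y).continuousAt.continuousWithinAt)
        (fun y _ => hasDerivAt_jainSum_zero hβ0 hβ1 y)
      rw [add_sub_cancel_left, eq_div_iff hβ.ne'] at hslope
      refine ⟨y, Ioo_subset_Icc_self hy, ?_⟩
      rw [← hslope, norm_mul, Real.norm_of_nonneg hβ0, mul_comm]

theorem jainSum_zero (hβ0 : 0 ≤ β) (hβ1 : β < 1) (α : ℝ) : jainSum 0 β α = (1 - β)⁻¹ := by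
  have hconst (x y : ℝ) : jainSum 0 β x = jainSum 0 β y := by
    have hderiv (x : ℝ) : HasDerivAt (jainSum 0 β) 0 x := by
      simpa [jainSum_zero_add_self hβ0 hβ1] using hasDerivAt_jainSum_zero hβ0 hβ1 x
    exact is_const_of_deriv_eq_zero (fun x => (hderiv x).differentiableAt)
      (fun x => (hderiv x).deriv) x y
  have h := jainSum_zero_zero hβ0 hβ1
  rw [hconst 0 α, hconst β α] at h
  exact eq_inv_of_mul_eq_one_left (by linear_combination h)

theorem eval_jainPoly (hβ0 : 0 ≤ β) (hβ1 : β < 1) (s : ℕ) (α : ℝ) :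
    (jainPoly β s).eval α = jainSum s β α := by
  induction s generalizing α with
  | zero => rw [jainPoly, eval_C, jainSum_zero hβ0 hβ1]
  | succ s ih =>
    have hη : 0 < 1 - β := sub_pos.mpr hβ1
    refine sub_eq_zero.mp (eq_zero_of_norm_le_mul_norm_of_isBigO_exp
      (h := fun x => (jainPoly β (s + 1)).eval x - jainSum (s + 1) β x) hβ0 hη.le
      (mul_exp_one_sub_mul_self_lt_one hβ0 hβ1)
      ((isBigO_eval_exp _ hη α).sub (isBigO_jainSum_exp hβ0 hβ1 (s + 1) α)) fun x _ => ?_)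
    have hpoly := congrArg (eval x) (jainPoly_succ_sub_C_mul_taylor hβ1.ne s)
    simp only [eval_sub, eval_mul, eval_C, eval_X, taylor_eval, ih] at hpoly
    have hshift : (jainPoly β (s + 1)).eval x - jainSum (s + 1) β x =
        β * ((jainPoly β (s + 1)).eval (x + β) - jainSum (s + 1) β (x + β)) := by
      linear_combination hpoly - jainSum_succ hβ0 hβ1 s x
    refine ⟨x + β, ⟨by linarith, le_rfl⟩, ?_⟩
    rw [hshift, norm_mul, Real.norm_of_nonneg hβ0]

end JainSum

theorem jain_theta_one_general (r : ℕ) (hr : 2 ≤ r) (β : ℝ) (hβ0 : 0 ≤ β) (hβ1 : β < 1) :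
    ∃ P : ℝ[X], P.natDegree = r - 1 ∧
      (∀ α : ℝ, P.eval α = (1 - β) ^ r * jainS r α β) ∧
      P.coeff (r - 2) = (Nat.choose r 2 : ℝ) * β ^ 2 / (1 - β) := by
  obtain ⟨s, rfl⟩ : ∃ s, r = s + 2 := ⟨r - 2, by omega⟩
  have hβ : 1 - β ≠ 0 := sub_ne_zero.mpr hβ1.ne'
  refine ⟨C ((1 - β) ^ (s + 2)) * jainPoly β (s + 1), ?_, fun α => ?_, ?_⟩
  · rw [natDegree_C_mul (pow_ne_zero _ hβ), natDegree_jainPoly hβ1.ne]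
    rfl
  · rw [eval_C_mul, eval_jainPoly hβ0 hβ1, jainS_succ s.succ_ne_zero]
  · rw [coeff_C_mul, Nat.add_sub_cancel, coeff_jainPoly_succ hβ1.ne, inv_pow]
    field_simp
    ring

theorem jain_theta_one (r : ℕ) (hr : 2 ≤ r) (β : ℝ) (hβ0 : 0 ≤ β) (hβ1 : β < 1) :
    ∃ P : Polynomial ℝ, P.natDegree = r - 1 ∧
      (∀ α : ℝ, 0 < α → P.eval α = (1 - β) ^ r * jainS r α β) ∧
      P.coeff (r - 2) = (Nat.choose r 2 : ℝ) * β ^ 2 / (1 - β) := by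
  obtain ⟨P, hdeg, heval, hcoeff⟩ := jain_theta_one_general r hr β hβ0 hβ1
  exact ⟨P, hdeg, fun α _ => heval α, hcoeff⟩
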